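/- Let Y^A be a conformal Killing field on an open set U ⊂ S^2 with Y^1 = (1/2)∇_C Y^C, and let u be a smooth function with compact support in U. Then ∫_U Y^1 [2∇_A∇_B u ∇^A∇^B u - (Δu)^2] = ∫_U Y^1 [(Δ+2)u]^2 + 2∫_U u (∇^A∇^B Y^1)(∇_A∇_B u - (1/2)(Δu)σ_{AB}). -/

import Mathlib

open MeasureTheory Real
noncomputable section

/-- Points of the stereographic chart of the round unit sphere `S²`
(the chart covers `S²` minus the north pole). -/
abbrev Pt := Fin 2 → ℝ

/-- Partial derivative `∂_a f`. -/
def pd (a : Fin 2) (f : Pt → ℝ) (x : Pt) : ℝ := fderiv ℝ f x (Pi.single a 1)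

/-- The round (unit sphere) metric `σ_{AB}` in stereographic coordinates. -/
def rnd (x : Pt) (a b : Fin 2) : ℝ :=
  (4 / (1 + x 0 ^ 2 + x 1 ^ 2) ^ 2) * (if a = b then 1 else 0)

/-- The inverse round metric `σ^{AB}`. -/
def rndInv (x : Pt) (a b : Fin 2) : ℝ :=
  ((1 + x 0 ^ 2 + x 1 ^ 2) ^ 2 / 4) * (if a = b then 1 else 0)

/-- The area form `ε_{AB}` of the round metric. -/
def rndE (x : Pt) (a b : Fin 2) : ℝ :=
  (4 / (1 + x 0 ^ 2 + x 1 ^ 2) ^ 2) *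
    (if a = 0 ∧ b = 1 then 1 else if a = 1 ∧ b = 0 then -1 else 0)

/-- The area form with raised indices `ε^{AB}`. -/
def rndEUp (x : Pt) (a b : Fin 2) : ℝ :=
  ∑ c, ∑ d, rndInv x a c * rndInv x b d * rndE x c d

/-- Christoffel symbols `Γ^c_{ab}` of the round metric. -/
def Gam (c a b : Fin 2) (x : Pt) : ℝ :=
  (1/2) * ∑ d, rndInv x c d *
    (pd a (fun y => rnd y d b) x + pd b (fun y => rnd y d a) x - pd d (fun y => rnd y a b) x)

/-- Covariant derivative `∇_a Y^b` of a vector field. -/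
def cdVec (Y : Pt → Fin 2 → ℝ) (x : Pt) (a b : Fin 2) : ℝ :=
  pd a (fun y => Y y b) x + ∑ c, Gam b a c x * Y x c

/-- Covariant derivative `∇_a ω_b` of a covector field. -/
def cdCov (ω : Pt → Fin 2 → ℝ) (x : Pt) (a b : Fin 2) : ℝ :=
  pd a (fun y => ω y b) x - ∑ c, Gam c a b x * ω x c

/-- Covariant derivative `∇_a T_{bc}` of a (0,2)-tensor. -/
def cdT2 (T : Pt → Fin 2 → Fin 2 → ℝ) (x : Pt) (a b c : Fin 2) : ℝ :=
  pd a (fun y => T y b c) x - ∑ d, Gam d a b x * T x d c - ∑ d, Gam d a c x * T x b d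

/-- Covariant derivative `∇_a T_b{}^c` of a (1,1)-tensor (lower, upper). -/
def cdMix (T : Pt → Fin 2 → Fin 2 → ℝ) (x : Pt) (a b c : Fin 2) : ℝ :=
  pd a (fun y => T y b c) x - ∑ d, Gam d a b x * T x d c + ∑ d, Gam c a d x * T x b d

/-- Covariant Hessian `∇_a ∇_b f`. -/
def hess (f : Pt → ℝ) (x : Pt) (a b : Fin 2) : ℝ := cdCov (fun y c => pd c f y) x a b

/-- Laplace–Beltrami operator `Δf = σ^{ab} ∇_a∇_b f` of the round metric. -/
def lap (f : Pt → ℝ) (x : Pt) : ℝ := ∑ a, ∑ b, rndInv x a b * hess f x a b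

/-- Covariant divergence `∇_A Y^A` of a vector field. -/
def divg (Y : Pt → Fin 2 → ℝ) (x : Pt) : ℝ := ∑ a, cdVec Y x a a

/-- The area density `√(det σ)` of the round metric in stereographic coordinates. -/
def aDen (x : Pt) : ℝ := 4 / (1 + x 0 ^ 2 + x 1 ^ 2) ^ 2

/-- Smoothness of a vector field. -/
def SmoothVec (Y : Pt → Fin 2 → ℝ) : Prop := ∀ b, ContDiff ℝ (⊤ : ℕ∞) (fun x => Y x b)

/-- The conformal Killing equation `∇^A Y^B + ∇^B Y^A = (∇_C Y^C) σ^{AB}` on a set `U`. -/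
def ConformalKilling (Y : Pt → Fin 2 → ℝ) (U : Set Pt) : Prop :=
  ∀ x ∈ U, ∀ A B : Fin 2,
    (∑ c, rndInv x A c * cdVec Y x c B) + (∑ c, rndInv x B c * cdVec Y x c A)
      = divg Y x * rndInv x A B

/-- The curl `ε_{AB} ∇^A Y^B` of a vector field. -/
def curl (Y : Pt → Fin 2 → ℝ) (x : Pt) : ℝ :=
  ∑ a, ∑ b, ∑ c, rndE x a b * rndInv x a c * cdVec Y x c b

/-! Let `S` be the trace-free part of `∇²u`, so that `2|∇²u|² - (Δu)² = 2⟨S, ∇²u⟩` in dimension two,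
and let `w = p ∇u - u ∇p`. Then `⟨S, ∇w⟩ = p ⟨S, ∇²u⟩ - u ⟨S, ∇²p⟩`, while on the unit sphere
`div S = ½ ∇(Δu + 2u)`. If `Δp = -2p` then moreover `div w = p (Δu + 2u)`. Hence the vector field
`2 S(w) - (Δu + 2u) w` has divergence
`p (2|∇²u|² - (Δu)²) - p (Δu + 2u)² - 2u ⟨S, ∇²p⟩`, and it is supported in the support of `u`.

The conformal Killing equation says that the components of `Y` in the stereographic chart satisfy
the Cauchy–Riemann equations; they are therefore harmonic, and `p = ½ div Y` satisfies
`Δp = -2p`. -/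

section PartialDerivatives

variable {f g : Pt → ℝ} {x : Pt} {a b : Fin 2} {U : Set Pt} {m n : WithTop ℕ∞}

lemma pd_const (c : ℝ) : pd a (fun _ => c) x = 0 := by
  simp [pd]

lemma pd_coord : pd a (fun y => y b) x = if b = a then 1 else 0 := by
  simp [pd, (hasFDerivAt_apply b x).fderiv, Pi.single_apply]

lemma pd_neg : pd a (fun y => -f y) x = -pd a f x := by
  simp [pd, fderiv_fun_neg]

lemma pd_add (hf : DifferentiableAt ℝ f x) (hg : DifferentiableAt ℝ g x) :
    pd a (fun y => f y + g y) x = pd a f x + pd a g x := by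
  simp [pd, fderiv_fun_add hf hg]

lemma pd_sub (hf : DifferentiableAt ℝ f x) (hg : DifferentiableAt ℝ g x) :
    pd a (fun y => f y - g y) x = pd a f x - pd a g x := by
  simp [pd, fderiv_fun_sub hf hg]

lemma pd_mul (hf : DifferentiableAt ℝ f x) (hg : DifferentiableAt ℝ g x) :
    pd a (fun y => f y * g y) x = f x * pd a g x + g x * pd a f x := by
  simp [pd, fderiv_fun_mul hf hg]

lemma pd_inv (hf : DifferentiableAt ℝ f x) (hx : f x ≠ 0) :
    pd a (fun y => (f y)⁻¹) x = -pd a f x / f x ^ 2 := by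
  have h := ((hasDerivAt_inv hx).comp_hasFDerivAt x hf.hasFDerivAt).fderiv
  simp only [Function.comp_def] at h
  simp only [pd, h, smul_apply, smul_eq_mul]
  ring

lemma pd_congr (h : f =ᶠ[nhds x] g) (a : Fin 2) : pd a f x = pd a g x := by
  simp only [pd, h.fderiv_eq]

lemma eqOn_pd (hU : IsOpen U) (h : Set.EqOn f g U) (a : Fin 2) :
    Set.EqOn (pd a f) (pd a g) U :=
  fun _ hx => pd_congr (h.eventuallyEq_of_mem (hU.mem_nhds hx)) a

lemma pd_eq_zero_of_notMem_tsupport (hx : x ∉ tsupport f) (a : Fin 2) : pd a f x = 0 := by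
  simp [pd, fderiv_of_notMem_tsupport ℝ hx]

lemma pd_pd_eq_zero_of_notMem_tsupport (hx : x ∉ tsupport f) (a b : Fin 2) :
    pd a (pd b f) x = 0 :=
  pd_eq_zero_of_notMem_tsupport (fun h => hx (tsupport_fderiv_apply_subset ℝ (Pi.single b 1) h)) a

lemma contDiffAt_pd (hf : ContDiffAt ℝ n f x) (hmn : m + 1 ≤ n) (a : Fin 2) :
    ContDiffAt ℝ m (pd a f) x :=
  (hf.fderiv_right hmn).clm_apply contDiffAt_const

lemma differentiableAt_pd (hf : ContDiffAt ℝ 2 f x) (a : Fin 2) : DifferentiableAt ℝ (pd a f) x :=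
  (contDiffAt_pd (m := 1) hf (by norm_num) a).differentiableAt (by norm_num)

lemma pd_comm (hf : ContDiffAt ℝ 2 f x) (a b : Fin 2) :
    pd a (pd b f) x = pd b (pd a f) x := by
  have hdf : DifferentiableAt ℝ (fderiv ℝ f) x :=
    (hf.fderiv_right (m := 1) (by norm_num)).differentiableAt (by norm_num)
  have pd_pd (c d : Fin 2) :
      pd c (pd d f) x = fderiv ℝ (fderiv ℝ f) x (Pi.single c 1) (Pi.single d 1) := by
    change fderiv ℝ (fun y => fderiv ℝ f y (Pi.single d 1)) x (Pi.single c 1) = _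
    simp [fderiv_clm_apply hdf (differentiableAt_const _)]
  rw [pd_pd, pd_pd]
  exact hf.isSymmSndFDerivAt (by simp [minSmoothness_of_isRCLikeNormedField]) _ _

lemma pd_pd_comm (hf : ContDiffAt ℝ 3 f x) (a b c : Fin 2) :
    pd c (pd a (pd b f)) x = pd c (pd b (pd a f)) x := by
  refine pd_congr ?_ c
  filter_upwards [hf.eventually (by simp)] with y hy
  exact pd_comm (hy.of_le (by norm_num)) a b

lemma integrable_pd (hf : ContDiff ℝ 1 f) (hc : HasCompactSupport f) (a : Fin 2) :
    Integrable (pd a f) :=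
  ((hf.continuous_fderiv (by norm_num)).clm_apply continuous_const).integrable_of_hasCompactSupport
    (hc.fderiv_apply ℝ _)

lemma integral_pd_eq_zero (hf : ContDiff ℝ 1 f) (hc : HasCompactSupport f) (a : Fin 2) :
    ∫ x, pd a f x = 0 := by
  have h := integral_mul_fderiv_eq_neg_fderiv_mul_of_integrable (μ := (volume : Measure Pt))
    (f := fun _ => (1 : ℝ)) (g := f) (v := Pi.single a 1) (by simp)
    (by simpa only [one_mul] using! integrable_pd hf hc a)
    (by simpa only [one_mul] using hf.continuous.integrable_of_hasCompactSupport hc)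
    (fun _ _ => differentiableAt_const _) (fun x _ => hf.differentiable (by norm_num) x)
  simpa [pd] using h

end PartialDerivatives

section CompactlySupported

lemma integrableOn_of_continuousOn_of_eq_zero {X E : Type*} [TopologicalSpace X] [T2Space X]
    [MeasurableSpace X] [OpensMeasurableSpace X] [NormedAddCommGroup E] {μ : Measure X}
    [IsFiniteMeasureOnCompacts μ] {F : X → E} {U K : Set X} (hU : IsOpen U) (hK : IsCompact K)
    (hKU : K ⊆ U) (hF : ContinuousOn F U) (hF0 : ∀ x ∉ K, F x = 0) : IntegrableOn F U μ :=
  ((hF.mono hKU).integrableOn_compact hK).of_forall_sdiff_eq_zero hU.measurableSet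
    fun x hx => hF0 x hx.2

lemma tsupport_subset_of_eq_zero {X E : Type*} [TopologicalSpace X] [Zero E] {F : X → E}
    {K : Set X} (hK : IsClosed K) (hF0 : ∀ x ∉ K, F x = 0) : tsupport F ⊆ K :=
  closure_minimal (Function.support_subset_iff'.2 hF0) hK

lemma contDiff_of_contDiffOn_of_tsupport_subset {E F : Type*} [NormedAddCommGroup E]
    [NormedSpace ℝ E] [NormedAddCommGroup F] [NormedSpace ℝ F] {n : WithTop ℕ∞} {f : E → F}
    {U : Set E} (hU : IsOpen U) (hf : ContDiffOn ℝ n f U) (hfU : tsupport f ⊆ U) :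
    ContDiff ℝ n f :=
  contMDiff_iff_contDiff.1 <| contMDiff_of_tsupport fun _ hx =>
    (hf.contDiffAt (hU.mem_nhds (hfU hx))).contMDiffAt

theorem setIntegral_sum_pd_eq_zero {V : Pt → Fin 2 → ℝ} {U K : Set Pt} (hU : IsOpen U)
    (hK : IsCompact K) (hKU : K ⊆ U) (hV : ∀ a, ContDiffOn ℝ 1 (fun x => V x a) U)
    (hV0 : ∀ x ∉ K, ∀ a, V x a = 0) :
    ∫ x in U, ∑ a, pd a (fun y => V y a) x = 0 := by
  have tsupport_V (a) : tsupport (fun x => V x a) ⊆ K :=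
    tsupport_subset_of_eq_zero hK.isClosed fun x hx => hV0 x hx a
  have smooth_V (a) : ContDiff ℝ 1 (fun x => V x a) :=
    contDiff_of_contDiffOn_of_tsupport_subset hU (hV a) ((tsupport_V a).trans hKU)
  have compact_V (a) : HasCompactSupport (fun x => V x a) :=
    hK.of_isClosed_subset (isClosed_tsupport _) (tsupport_V a)
  rw [setIntegral_eq_integral_of_forall_compl_eq_zero, integral_finsetSum]
  · exact Finset.sum_eq_zero fun a _ => integral_pd_eq_zero (smooth_V a) (compact_V a) a
  · exact fun a _ => integrable_pd (smooth_V a) (compact_V a) a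
  · exact fun x hx => Finset.sum_eq_zero fun a _ =>
      pd_eq_zero_of_notMem_tsupport (fun h => hx (hKU (tsupport_V a h))) a

end CompactlySupported

section RoundMetric

variable {f : Pt → ℝ} {x : Pt} {n : WithTop ℕ∞}

/-- The inverse of the stereographic conformal factor: `σ_{ab} = δ_{ab} / stereoFactor²`. -/
def stereoFactor (x : Pt) : ℝ := (1 + x 0 ^ 2 + x 1 ^ 2) / 2

lemma two_mul_stereoFactor (x : Pt) : 2 * stereoFactor x = 1 + x 0 ^ 2 + x 1 ^ 2 := by
  unfold stereoFactor; ring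

lemma stereoFactor_pos (x : Pt) : 0 < stereoFactor x := by
  unfold stereoFactor; positivity

lemma stereoFactor_ne_zero (x : Pt) : stereoFactor x ≠ 0 := (stereoFactor_pos x).ne'

@[fun_prop]
lemma contDiff_stereoFactor : ContDiff ℝ n stereoFactor := by
  unfold stereoFactor; fun_prop

@[fun_prop]
lemma differentiable_stereoFactor : Differentiable ℝ stereoFactor := by
  unfold stereoFactor; fun_prop

lemma pd_stereoFactor (a : Fin 2) (x : Pt) : pd a stereoFactor x = x a := by
  have h : stereoFactor = fun y => 1 / 2 * (1 + y 0 * y 0 + y 1 * y 1) := by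
    funext y; simp only [stereoFactor]; ring
  rw [h]
  simp (disch := fun_prop) only [pd_add, pd_mul, pd_const, pd_coord]
  fin_cases a <;>
    simp only [Fin.zero_eta, Fin.mk_one, Fin.isValue, ↓reduceIte, zero_ne_one, one_ne_zero] <;>
    ring

lemma pd_inv_stereoFactor (a : Fin 2) (x : Pt) :
    pd a (fun y => (stereoFactor y)⁻¹) x = -x a / stereoFactor x ^ 2 := by
  rw [pd_inv (by fun_prop) (stereoFactor_ne_zero x), pd_stereoFactor]

lemma rnd_eq (x : Pt) (a b : Fin 2) :
    rnd x a b = (stereoFactor x)⁻¹ * (stereoFactor x)⁻¹ * if a = b then 1 else 0 := by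
  simp only [rnd, stereoFactor]; field_simp; ring

lemma rndInv_eq (x : Pt) (a b : Fin 2) :
    rndInv x a b = stereoFactor x ^ 2 * if a = b then 1 else 0 := by
  simp only [rndInv, stereoFactor]; ring

lemma aDen_eq (x : Pt) : aDen x = (stereoFactor x ^ 2)⁻¹ := by
  simp only [aDen, stereoFactor]; field_simp; norm_num

lemma Gam_eq (c a b : Fin 2) (x : Pt) :
    Gam c a b x = ((if a = b then 1 else 0) * x c - (if c = b then 1 else 0) * x a
      - (if c = a then 1 else 0) * x b) / stereoFactor x := by
  have pd_rnd (d a b : Fin 2) :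
      pd d (fun y => rnd y a b) x = -2 * x d / stereoFactor x ^ 3 * if a = b then 1 else 0 := by
    have h := stereoFactor_ne_zero x
    simp only [rnd_eq]
    simp (disch := first | fun_prop (disch := assumption) | assumption) only
      [pd_mul, pd_inv_stereoFactor, pd_const]
    field_simp; ring
  have h := stereoFactor_ne_zero x
  simp only [Gam, pd_rnd, rndInv_eq, Fin.sum_univ_two]
  fin_cases c <;> fin_cases a <;> fin_cases b <;>
    simp only [Fin.zero_eta, Fin.mk_one, Fin.isValue, ↓reduceIte, zero_ne_one, one_ne_zero] <;>
    field_simp <;> ring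

lemma hess_eq (f : Pt → ℝ) (x : Pt) (a b : Fin 2) :
    hess f x a b = pd a (pd b f) x + (stereoFactor x)⁻¹ * (x a * pd b f x + x b * pd a f x
      - (if a = b then 1 else 0) * ∑ c, x c * pd c f x) := by
  simp only [hess, cdCov, Gam_eq, Fin.sum_univ_two]
  fin_cases a <;> fin_cases b <;>
    simp only [Fin.zero_eta, Fin.mk_one, Fin.isValue, ↓reduceIte, zero_ne_one, one_ne_zero] <;>
    ring

/-- The Laplacian of the flat metric of the stereographic chart. -/
def flatLap (f : Pt → ℝ) (x : Pt) : ℝ := ∑ a, pd a (pd a f) x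

lemma lap_eq (f : Pt → ℝ) (x : Pt) : lap f x = stereoFactor x ^ 2 * flatLap f x := by
  simp only [lap, hess_eq, rndInv_eq, flatLap, Fin.sum_univ_two]
  simp only [Fin.isValue, ↓reduceIte, zero_ne_one, one_ne_zero]
  ring

lemma divg_eq (Y : Pt → Fin 2 → ℝ) (x : Pt) :
    divg Y x = ∑ a, pd a (fun y => Y y a) x - 2 * ((stereoFactor x)⁻¹ * ∑ a, x a * Y x a) := by
  simp only [divg, cdVec, Gam_eq, Fin.sum_univ_two]
  simp only [Fin.isValue, ↓reduceIte, zero_ne_one, one_ne_zero]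
  ring

lemma hess_symm (hf : ContDiffAt ℝ 2 f x) (a b : Fin 2) : hess f x a b = hess f x b a := by
  simp only [hess_eq, pd_comm hf a b, eq_comm (a := a)]; ring

/-- The inner product of covariant two-tensors at a point, induced by the round metric. -/
def tensorInner (x : Pt) (S T : Fin 2 → Fin 2 → ℝ) : ℝ :=
  ∑ A, ∑ B, ∑ a, ∑ b, S A B * rndInv x A a * rndInv x B b * T a b

lemma tensorInner_eq_sum_raised_mul (x : Pt) (S T : Fin 2 → Fin 2 → ℝ) :
    tensorInner x S T = ∑ A, ∑ B, ∑ a, ∑ b, rndInv x A a * rndInv x B b * T a b * S A B := by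
  simp only [tensorInner, mul_assoc, mul_comm (S _ _)]

lemma tensorInner_eq (x : Pt) (S T : Fin 2 → Fin 2 → ℝ) :
    tensorInner x S T = stereoFactor x ^ 4 * ∑ a, ∑ b, S a b * T a b := by
  simp only [tensorInner, rndInv_eq, Fin.sum_univ_two]
  simp only [Fin.isValue, ↓reduceIte, zero_ne_one, one_ne_zero]
  ring

end RoundMetric

section TracelessHessian

variable {f : Pt → ℝ} {x : Pt} {m n : WithTop ℕ∞}

/-- The trace-free part `∇_a∇_b f - ½ (Δf) σ_{ab}` of the covariant Hessian. -/
def tracelessHess (f : Pt → ℝ) (x : Pt) (a b : Fin 2) : ℝ :=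
  hess f x a b - (1/2) * lap f x * rnd x a b

lemma tracelessHess_eq (f : Pt → ℝ) (x : Pt) (a b : Fin 2) :
    tracelessHess f x a b = hess f x a b - (1/2) * flatLap f x * if a = b then 1 else 0 := by
  have h := stereoFactor_ne_zero x
  simp only [tracelessHess, lap_eq, rnd_eq]
  field_simp

lemma tracelessHess_symm (hf : ContDiffAt ℝ 2 f x) (a b : Fin 2) :
    tracelessHess f x a b = tracelessHess f x b a := by
  simp only [tracelessHess_eq, hess_symm hf a b, eq_comm (a := a)]

lemma sum_tracelessHess_self (f : Pt → ℝ) (x : Pt) : ∑ a, tracelessHess f x a a = 0 := by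
  simp only [tracelessHess_eq, hess_eq, flatLap, Fin.sum_univ_two, if_true]; ring

lemma two_mul_tensorInner_hess_self_sub (hf : ContDiffAt ℝ 2 f x) :
    2 * tensorInner x (hess f x) (hess f x) - lap f x ^ 2
      = 2 * tensorInner x (tracelessHess f x) (hess f x) := by
  simp only [tensorInner_eq, tracelessHess_eq, lap_eq, flatLap, hess_eq, Fin.sum_univ_two,
    pd_comm hf 1 0]
  simp only [Fin.isValue, ↓reduceIte, zero_ne_one, one_ne_zero]
  ring

lemma contDiffAt_hess (hf : ContDiffAt ℝ n f x) (hmn : m + 2 ≤ n) (a b : Fin 2) :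
    ContDiffAt ℝ m (fun y => hess f y a b) x := by
  have h1 (c) := contDiffAt_pd (m := m + 1) hf (by rwa [add_assoc, one_add_one_eq_two]) c
  have h0 (c) := (h1 c).of_le le_self_add
  have h2 := contDiffAt_pd (h1 b) le_rfl a
  have hr : stereoFactor x ≠ 0 := stereoFactor_ne_zero x
  simp only [hess_eq]
  fun_prop (disch := assumption)

lemma contDiffAt_lap (hf : ContDiffAt ℝ n f x) (hmn : m + 2 ≤ n) :
    ContDiffAt ℝ m (lap f) x := by
  have h (a b) := contDiffAt_hess hf hmn a b
  unfold lap
  simp only [rndInv_eq]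
  fun_prop

lemma contDiffAt_tracelessHess (hf : ContDiffAt ℝ n f x) (hmn : m + 2 ≤ n) (a b : Fin 2) :
    ContDiffAt ℝ m (fun y => tracelessHess f y a b) x := by
  have hH := contDiffAt_hess hf hmn a b
  have hL := contDiffAt_lap hf hmn
  have hr : stereoFactor x ≠ 0 := stereoFactor_ne_zero x
  simp only [tracelessHess, rnd_eq]
  fun_prop (disch := assumption)

lemma hess_eq_zero_of_notMem_tsupport (hx : x ∉ tsupport f) (a b : Fin 2) : hess f x a b = 0 := by
  simp [hess_eq, pd_eq_zero_of_notMem_tsupport hx, pd_pd_eq_zero_of_notMem_tsupport hx]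

lemma lap_eq_zero_of_notMem_tsupport (hx : x ∉ tsupport f) : lap f x = 0 := by
  simp [lap, hess_eq_zero_of_notMem_tsupport hx]

lemma tracelessHess_eq_zero_of_notMem_tsupport (hx : x ∉ tsupport f) (a b : Fin 2) :
    tracelessHess f x a b = 0 := by
  simp [tracelessHess, hess_eq_zero_of_notMem_tsupport hx, lap_eq_zero_of_notMem_tsupport hx]

/- The contracted Codazzi equation `∇^a S_{ab} = ½ ∇_b (Δf + 2f)`; the term `2f` comes from
commuting derivatives on the unit sphere, where `Ric = σ`. -/
theorem sum_pd_tracelessHess (hf : ContDiffAt ℝ 3 f x) (b : Fin 2) :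
    ∑ a, pd a (fun y => tracelessHess f y a b) x
      = aDen x / 2 * pd b (fun y => lap f y + 2 * f y) x := by
  have d0 := hf.differentiableAt (by norm_num)
  have d1 (c) := differentiableAt_pd (hf.of_le (by norm_num)) c
  have smooth_pd (c) : ContDiffAt ℝ 2 (pd c f) x := contDiffAt_pd hf (by norm_num) c
  have d2 (c d) := differentiableAt_pd (smooth_pd d) c
  have comm₂ := pd_comm (hf.of_le (by norm_num)) 1 0
  have comm₃ (c) := pd_comm (smooth_pd c) 1 0
  have hr := stereoFactor_ne_zero x
  simp only [tracelessHess_eq, hess_eq, lap_eq, flatLap, aDen_eq, Fin.sum_univ_two, pow_two]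
  simp (disch := first | fun_prop (disch := assumption) | assumption) only
    [pd_add, pd_sub, pd_mul, pd_const, pd_coord, pd_inv_stereoFactor, pd_stereoFactor]
  fin_cases b
  · simp only [Fin.zero_eta, Fin.isValue, ↓reduceIte, zero_ne_one, one_ne_zero, comm₃, comm₂,
      pd_pd_comm hf 1 0]
    field_simp
    linear_combination 2 * pd 0 f x * two_mul_stereoFactor x
  · simp only [Fin.mk_one, Fin.isValue, ↓reduceIte, zero_ne_one, one_ne_zero, comm₃, comm₂,
      pd_pd_comm hf 1 0]
    field_simp
    linear_combination 2 * pd 1 f x * two_mul_stereoFactor x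

end TracelessHessian

section Flux

variable {p u : Pt → ℝ} {x : Pt} {S : Pt → Fin 2 → Fin 2 → ℝ} {w : Pt → Fin 2 → ℝ}

/- In a two-dimensional conformally flat chart the Christoffel terms of `∇^a S_{ab}` pair only with
the trace of `S`, so `∇^a S_{ab} = stereoFactor² ∂_a S_{ab}`; also
`√σ S^{ab} = stereoFactor² S_{ab}`. -/
lemma sum_pd_symm_traceless_mul (hS : ∀ a b, DifferentiableAt ℝ (fun y => S y a b) x)
    (hw : ∀ b, DifferentiableAt ℝ (fun y => w y b) x)
    (hsymm : ∀ a b, S x a b = S x b a) (htrace : ∑ a, S x a a = 0) :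
    ∑ a, pd a (fun y => stereoFactor y ^ 2 * ∑ b, S y a b * w y b) x
      = aDen x * tensorInner x (S x) (cdCov w x)
        + stereoFactor x ^ 2 * ∑ b, (∑ a, pd a (fun y => S y a b) x) * w x b := by
  have hr := stereoFactor_ne_zero x
  have htrace' : S x 1 1 = -S x 0 0 := by rw [Fin.sum_univ_two] at htrace; linarith
  simp only [tensorInner_eq, aDen_eq, cdCov, Gam_eq, Fin.sum_univ_two, pow_two]
  simp (disch := fun_prop) only [pd_add, pd_mul, pd_stereoFactor, hsymm 1 0, htrace']
  simp only [Fin.isValue, ↓reduceIte, zero_ne_one, one_ne_zero]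
  field_simp
  ring

/-- The Wronskian covector `p ∇_a u - u ∇_a p` of two functions. -/
def wronskianCov (p u : Pt → ℝ) (x : Pt) (a : Fin 2) : ℝ := p x * pd a u x - u x * pd a p x

lemma cdCov_wronskianCov (hp : ContDiffAt ℝ 2 p x) (hu : ContDiffAt ℝ 2 u x) (a b : Fin 2) :
    cdCov (wronskianCov p u) x a b
      = p x * hess u x a b - u x * hess p x a b + (pd a p x * pd b u x - pd a u x * pd b p x) := by
  have dp := hp.differentiableAt (by norm_num)
  have du := hu.differentiableAt (by norm_num)
  have dp' (c) := differentiableAt_pd hp c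
  have du' (c) := differentiableAt_pd hu c
  simp only [hess, cdCov, wronskianCov, Fin.sum_univ_two]
  simp (disch := fun_prop) only [pd_sub, pd_mul]
  ring

lemma sum_pd_wronskianCov (hp : ContDiffAt ℝ 2 p x) (hu : ContDiffAt ℝ 2 u x) :
    ∑ a, pd a (fun y => wronskianCov p u y a) x = aDen x * (p x * lap u x - u x * lap p x) := by
  have dp := hp.differentiableAt (by norm_num)
  have du := hu.differentiableAt (by norm_num)
  have dp' (c) := differentiableAt_pd hp c
  have du' (c) := differentiableAt_pd hu c
  have hr := stereoFactor_ne_zero x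
  simp only [wronskianCov, lap_eq, aDen_eq, flatLap, Fin.sum_univ_two]
  simp (disch := fun_prop) only [pd_sub, pd_mul]
  field_simp
  ring

lemma contDiffAt_wronskianCov (hp : ContDiffAt ℝ 2 p x) (hu : ContDiffAt ℝ 2 u x) (a : Fin 2) :
    ContDiffAt ℝ 1 (fun y => wronskianCov p u y a) x := by
  have hp' := contDiffAt_pd (m := 1) hp (by norm_num) a
  have hu' := contDiffAt_pd (m := 1) hu (by norm_num) a
  have hp₁ := hp.of_le (m := 1) (by norm_num)
  have hu₁ := hu.of_le (m := 1) (by norm_num)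
  unfold wronskianCov
  fun_prop

lemma tensorInner_tracelessHess_cdCov_wronskianCov
    (hp : ContDiffAt ℝ 2 p x) (hu : ContDiffAt ℝ 2 u x) :
    tensorInner x (tracelessHess u x) (cdCov (wronskianCov p u) x)
      = p x * tensorInner x (tracelessHess u x) (hess u x)
        - u x * tensorInner x (tracelessHess u x) (hess p x) := by
  simp only [tensorInner_eq, cdCov_wronskianCov hp hu, Fin.sum_univ_two, tracelessHess_symm hu 1 0]
  ring

/-- The vector density `√σ (2 S^{ab} w_b - (Δu + 2u) w^a)` built from the trace-free Hessian `S`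
of `u` and the Wronskian covector `w` of `p` and `u`; its flat divergence is the difference of the
integrands. -/
def bochnerFlux (p u : Pt → ℝ) (x : Pt) (a : Fin 2) : ℝ :=
  2 * (stereoFactor x ^ 2 * ∑ b, tracelessHess u x a b * wronskianCov p u x b)
    - (lap u x + 2 * u x) * wronskianCov p u x a

lemma contDiffAt_bochnerFlux (hp : ContDiffAt ℝ 2 p x) (hu : ContDiffAt ℝ 3 u x) (a : Fin 2) :
    ContDiffAt ℝ 1 (fun y => bochnerFlux p u y a) x := by
  have hS (b) := contDiffAt_tracelessHess (m := 1) hu (by norm_num) a b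
  have hw (b) := contDiffAt_wronskianCov hp (hu.of_le (by norm_num)) b
  have hL := contDiffAt_lap (m := 1) hu (by norm_num)
  have hu₁ := hu.of_le (m := 1) (by norm_num)
  unfold bochnerFlux
  fun_prop

lemma bochnerFlux_eq_zero_of_notMem_tsupport (hx : x ∉ tsupport u) (a : Fin 2) :
    bochnerFlux p u x a = 0 := by
  simp [bochnerFlux, tracelessHess_eq_zero_of_notMem_tsupport hx,
    lap_eq_zero_of_notMem_tsupport hx, image_eq_zero_of_notMem_tsupport hx]

theorem sum_pd_bochnerFlux (hp : ContDiffAt ℝ 2 p x) (hu : ContDiffAt ℝ 3 u x)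
    (hΔp : lap p x = -2 * p x) :
    ∑ a, pd a (fun y => bochnerFlux p u y a) x
      = p x * (2 * tensorInner x (hess u x) (hess u x) - lap u x ^ 2) * aDen x
        - p x * (lap u x + 2 * u x) ^ 2 * aDen x
        - 2 * (u x * tensorInner x (tracelessHess u x) (hess p x) * aDen x) := by
  have hu₂ : ContDiffAt ℝ 2 u x := hu.of_le (by norm_num)
  have dS (a b) := (contDiffAt_tracelessHess (m := 1) hu (by norm_num) a b).differentiableAt
    (by norm_num)
  have dw (b) := (contDiffAt_wronskianCov hp hu₂ b).differentiableAt (by norm_num)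
  have dW : DifferentiableAt ℝ (fun y => lap u y + 2 * u y) x :=
    ((contDiffAt_lap (m := 1) hu (by norm_num)).differentiableAt (by norm_num)).add
      ((hu.differentiableAt (by norm_num)).const_mul 2)
  have aDen_mul : stereoFactor x ^ 2 * aDen x = 1 := by
    rw [aDen_eq, mul_inv_cancel₀ (pow_ne_zero 2 (stereoFactor_ne_zero x))]
  have div_S_w : ∑ a, pd a (fun y => stereoFactor y ^ 2 *
        ∑ b, tracelessHess u y a b * wronskianCov p u y b) x
      = aDen x * (p x * tensorInner x (tracelessHess u x) (hess u x)
          - u x * tensorInner x (tracelessHess u x) (hess p x))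
        + 1 / 2 * ∑ b, wronskianCov p u x b * pd b (fun y => lap u y + 2 * u y) x := by
    rw [sum_pd_symm_traceless_mul dS dw (tracelessHess_symm hu₂) (sum_tracelessHess_self u x),
      tensorInner_tracelessHess_cdCov_wronskianCov hp hu₂]
    simp only [sum_pd_tracelessHess hu, Fin.sum_univ_two]
    linear_combination 1 / 2 * (wronskianCov p u x 0 * pd 0 (fun y => lap u y + 2 * u y) x
      + wronskianCov p u x 1 * pd 1 (fun y => lap u y + 2 * u y) x) * aDen_mul
  have leibniz (a : Fin 2) : pd a (fun y => bochnerFlux p u y a) x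
      = 2 * pd a (fun y => stereoFactor y ^ 2 *
          ∑ b, tracelessHess u y a b * wronskianCov p u y b) x
        - ((lap u x + 2 * u x) * pd a (fun y => wronskianCov p u y a) x
          + wronskianCov p u x a * pd a (fun y => lap u y + 2 * u y) x) := by
    unfold bochnerFlux
    simp (disch := fun_prop) only [pd_sub, pd_mul (f := fun _ => 2),
      pd_mul (f := fun y => lap u y + 2 * u y), pd_const]
    ring
  rw [two_mul_tensorInner_hess_self_sub hu₂]
  simp only [leibniz, Finset.sum_sub_distrib, Finset.sum_add_distrib, ← Finset.mul_sum, div_S_w,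
    sum_pd_wronskianCov hp hu₂, hΔp]
  ring

end Flux

section ConformalKilling

variable {A B f g : Pt → ℝ} {x : Pt} {U : Set Pt} {Y : Pt → Fin 2 → ℝ}

lemma eqOn_flatLap (hU : IsOpen U) (h : Set.EqOn f g U) : Set.EqOn (flatLap f) (flatLap g) U :=
  fun _ hx => Finset.sum_congr rfl fun a _ => eqOn_pd hU (eqOn_pd hU h a) a hx

lemma flatLap_add (hf : ContDiffAt ℝ 2 f x) (hg : ContDiffAt ℝ 2 g x) :
    flatLap (fun y => f y + g y) x = flatLap f x + flatLap g x := by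
  have additive (a : Fin 2) :
      pd a (fun y => f y + g y) =ᶠ[nhds x] fun y => pd a f y + pd a g y := by
    filter_upwards [hf.eventually (by simp), hg.eventually (by simp)] with y hfy hgy
    exact pd_add (hfy.differentiableAt (by norm_num)) (hgy.differentiableAt (by norm_num))
  simp only [flatLap, pd_congr (additive _), pd_add (differentiableAt_pd hf _)
    (differentiableAt_pd hg _), Finset.sum_add_distrib]

lemma flatLap_mul (hf : ContDiffAt ℝ 2 f x) (hg : ContDiffAt ℝ 2 g x) :
    flatLap (fun y => f y * g y) x
      = f x * flatLap g x + 2 * ∑ a, pd a f x * pd a g x + g x * flatLap f x := by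
  have df' (c) := differentiableAt_pd hf c
  have dg' (c) := differentiableAt_pd hg c
  have df := hf.differentiableAt (by norm_num)
  have dg := hg.differentiableAt (by norm_num)
  have leibniz (a : Fin 2) :
      pd a (fun y => f y * g y) =ᶠ[nhds x] fun y => f y * pd a g y + g y * pd a f y := by
    filter_upwards [hf.eventually (by simp), hg.eventually (by simp)] with y hfy hgy
    exact pd_mul (hfy.differentiableAt (by norm_num)) (hgy.differentiableAt (by norm_num))
  simp only [flatLap, pd_congr (leibniz _), Fin.sum_univ_two]
  simp (disch := fun_prop) only [pd_add, pd_mul]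
  ring

lemma flatLap_neg_inv_stereoFactor (x : Pt) :
    flatLap (fun y => -(stereoFactor y)⁻¹) x
      = 2 * (1 - stereoFactor x) / stereoFactor x ^ 3 := by
  have hr := stereoFactor_ne_zero x
  have pd_neg_inv (a : Fin 2) : pd a (fun y => -(stereoFactor y)⁻¹)
      = fun y => y a * ((stereoFactor y)⁻¹ * (stereoFactor y)⁻¹) := by
    funext y
    rw [pd_neg, pd_inv_stereoFactor]
    field_simp [stereoFactor_ne_zero y]
  simp only [flatLap, pd_neg_inv, Fin.sum_univ_two]
  simp (disch := first | fun_prop (disch := assumption) | assumption) only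
    [pd_mul, pd_coord, pd_inv_stereoFactor, if_true]
  field_simp
  linear_combination 2 * two_mul_stereoFactor x

lemma pd_sum_coord_mul (hY : ∀ b, DifferentiableAt ℝ (fun y => Y y b) x) (a : Fin 2) :
    pd a (fun y => ∑ b, y b * Y y b) x = Y x a + ∑ b, x b * pd a (fun y => Y y b) x := by
  simp only [Fin.sum_univ_two]
  simp (disch := fun_prop) only [pd_add, pd_mul, pd_coord]
  fin_cases a <;>
    simp only [Fin.zero_eta, Fin.mk_one, Fin.isValue, ↓reduceIte, zero_ne_one, one_ne_zero] <;>
    ring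

lemma flatLap_sum_coord_mul (hY : ∀ b, ContDiffAt ℝ 2 (fun y => Y y b) x) :
    flatLap (fun y => ∑ b, y b * Y y b) x
      = ∑ b, x b * flatLap (fun y => Y y b) x + 2 * ∑ b, pd b (fun y => Y y b) x := by
  have flatLap_coord (b : Fin 2) : flatLap (fun y => y b) x = 0 := by
    have pd_coord' (a : Fin 2) : pd a (fun y => y b) = fun _ => if b = a then 1 else 0 :=
      funext fun _ => pd_coord
    simp only [flatLap, pd_coord', pd_const, Finset.sum_const_zero]
  simp only [Fin.sum_univ_two]
  rw [flatLap_add (by fun_prop) (by fun_prop), flatLap_mul (by fun_prop) (hY 0),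
    flatLap_mul (by fun_prop) (hY 1)]
  simp only [flatLap_coord, pd_coord, ite_mul, one_mul, zero_mul, Finset.sum_ite_eq,
    Finset.mem_univ, ↓reduceIte]
  ring

/-- The Cauchy–Riemann equations of `A + iB` on `U`, in the chart coordinate `x⁰ + i x¹`. -/
def CauchyRiemannOn (A B : Pt → ℝ) (U : Set Pt) : Prop :=
  ∀ x ∈ U, pd 1 B x = pd 0 A x ∧ pd 1 A x = -pd 0 B x

namespace CauchyRiemannOn

lemma neg_swap (h : CauchyRiemannOn A B U) : CauchyRiemannOn B (fun y => -A y) U :=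
  fun x hx => ⟨by rw [pd_neg, (h x hx).2, neg_neg], by rw [pd_neg, neg_neg, (h x hx).1]⟩

lemma pd_zero (h : CauchyRiemannOn A B U) (hU : IsOpen U) (hA : ContDiffOn ℝ 2 A U)
    (hB : ContDiffOn ℝ 2 B U) : CauchyRiemannOn (pd 0 A) (pd 0 B) U := fun x hx => by
  have hxU := hU.mem_nhds hx
  constructor
  · rw [pd_comm (hB.contDiffAt hxU), eqOn_pd hU (fun y hy => (h y hy).1) 0 hx]
  · rw [pd_comm (hA.contDiffAt hxU), eqOn_pd hU (fun y hy => (h y hy).2) 0 hx, pd_neg]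

lemma flatLap_fst (h : CauchyRiemannOn A B U) (hU : IsOpen U) (hB : ContDiffOn ℝ 2 B U)
    (hx : x ∈ U) : flatLap A x = 0 := by
  have pd_pd_one : pd 1 (pd 1 A) x = -pd 0 (pd 0 A) x := by
    rw [eqOn_pd hU (fun y hy => (h y hy).2) 1 hx, pd_neg, pd_comm (hB.contDiffAt (hU.mem_nhds hx)),
      eqOn_pd hU (fun y hy => (h y hy).1) 0 hx]
  rw [flatLap, Fin.sum_univ_two, pd_pd_one, add_neg_cancel]

lemma flatLap_snd (h : CauchyRiemannOn A B U) (hU : IsOpen U) (hA : ContDiffOn ℝ 2 A U)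
    (hx : x ∈ U) : flatLap B x = 0 :=
  h.neg_swap.flatLap_fst hU hA.neg hx

end CauchyRiemannOn

lemma cauchyRiemannOn_of_conformalKilling (h : ConformalKilling Y U) :
    CauchyRiemannOn (fun y => Y y 0) (fun y => Y y 1) U := fun x hx => by
  have h₀₀ := h x hx 0 0
  have h₀₁ := h x hx 0 1
  have hr := pow_ne_zero 2 (stereoFactor_ne_zero x)
  simp only [divg, cdVec, Gam_eq, rndInv_eq, Fin.sum_univ_two] at h₀₀ h₀₁
  simp only [↓reduceIte, mul_one, Fin.isValue, one_mul, sub_self, zero_sub, zero_ne_one, zero_mul,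
    mul_zero, one_ne_zero, sub_zero, add_zero, zero_add] at h₀₀ h₀₁
  constructor <;> apply mul_left_cancel₀ hr
  · linear_combination -h₀₀
  · linear_combination h₀₁

lemma half_divg_eq_of_conformalKilling (h : ConformalKilling Y U) (hx : x ∈ U) :
    (1/2) * divg Y x
      = pd 0 (fun y => Y y 0) x + -(stereoFactor x)⁻¹ * ∑ b, x b * Y x b := by
  simp only [divg_eq, Fin.sum_univ_two, (cauchyRiemannOn_of_conformalKilling h x hx).1]
  ring

lemma contDiffOn_half_divg {m n : WithTop ℕ∞} (hU : IsOpen U)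
    (hY : ∀ b, ContDiffOn ℝ n (fun x => Y x b) U) (hmn : m + 1 ≤ n) :
    ContDiffOn ℝ m (fun x => (1/2) * divg Y x) U := fun x hx => by
  have hY' (b) := (hY b).contDiffAt (hU.mem_nhds hx)
  have hY₀ (b) := (hY' b).of_le (le_self_add.trans hmn)
  have hY₁ (a) := contDiffAt_pd (hY' a) hmn a
  have hr := stereoFactor_ne_zero x
  refine ContDiffAt.contDiffWithinAt ?_
  simp only [divg_eq]
  fun_prop (disch := assumption)

theorem lap_half_divg (hU : IsOpen U) (hY : ∀ b, ContDiffOn ℝ 3 (fun x => Y x b) U)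
    (hCKE : ConformalKilling Y U) (hx : x ∈ U) :
    lap (fun y => (1/2) * divg Y y) x = -2 * ((1/2) * divg Y x) := by
  have hxU := hU.mem_nhds hx
  have hCR := cauchyRiemannOn_of_conformalKilling hCKE
  have hY₂ (b) : ContDiffOn ℝ 2 (fun y => Y y b) U := (hY b).of_le (by norm_num)
  have hYx (b) : ContDiffAt ℝ 2 (fun y => Y y b) x := (hY₂ b).contDiffAt hxU
  have dY (b) := (hYx b).differentiableAt (by norm_num)
  have hY' (b) : ContDiffOn ℝ 2 (pd 0 (fun y => Y y b)) U := fun y hy =>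
    (contDiffAt_pd ((hY b).contDiffAt (hU.mem_nhds hy)) (by norm_num) 0).contDiffWithinAt
  have flatLap_Y₀' := (hCR.pd_zero hU (hY₂ 0) (hY₂ 1)).flatLap_fst hU (hY' 1) hx
  have flatLap_Y₀ := hCR.flatLap_fst hU (hY₂ 1) hx
  have flatLap_Y₁ := hCR.flatLap_snd hU (hY₂ 0) hx
  have hr := stereoFactor_ne_zero x
  have hrx : ContDiffAt ℝ 2 (fun y => -(stereoFactor y)⁻¹) x := by fun_prop (disch := assumption)
  rw [lap_eq, eqOn_flatLap hU (fun _ hy => half_divg_eq_of_conformalKilling hCKE hy) hx,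
    half_divg_eq_of_conformalKilling hCKE hx,
    flatLap_add ((hY' 0).contDiffAt hxU) (hrx.mul (by fun_prop)), flatLap_mul hrx (by fun_prop),
    flatLap_neg_inv_stereoFactor, flatLap_sum_coord_mul hYx]
  simp only [pd_sum_coord_mul dY, pd_neg, pd_inv_stereoFactor]
  simp only [Fin.sum_univ_two, flatLap_Y₀', flatLap_Y₀, flatLap_Y₁, (hCR x hx).1, (hCR x hx).2]
  field_simp
  linear_combination
    -2 * stereoFactor x * pd 0 (fun y => Y y 0) x * two_mul_stereoFactor x

end ConformalKilling

section Integrals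

variable {p u : Pt → ℝ} {U : Set Pt}

lemma continuousAt_tensorInner {x : Pt} {S T : Pt → Fin 2 → Fin 2 → ℝ}
    (hS : ∀ a b, ContinuousAt (fun y => S y a b) x)
    (hT : ∀ a b, ContinuousAt (fun y => T y a b) x) :
    ContinuousAt (fun y => tensorInner y (S y) (T y)) x := by
  have hr : ContinuousAt stereoFactor x := (contDiff_stereoFactor (n := 0)).continuous.continuousAt
  simp only [tensorInner_eq]
  fun_prop

lemma continuous_aDen : Continuous aDen := by
  have hr : Continuous stereoFactor := (contDiff_stereoFactor (n := 0)).continuous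
  simp only [funext aDen_eq]
  exact (hr.pow 2).inv₀ fun x => pow_ne_zero 2 (stereoFactor_ne_zero x)

lemma integrableOn_mul_tensorInner_hess_sub (hU : IsOpen U) (hp : ContinuousOn p U)
    (hu : ContDiff ℝ 2 u) (husupp : HasCompactSupport u) (huU : tsupport u ⊆ U) :
    IntegrableOn (fun x =>
      p x * (2 * tensorInner x (hess u x) (hess u x) - lap u x ^ 2) * aDen x) U := by
  have cont_aDen := continuous_aDen
  refine integrableOn_of_continuousOn_of_eq_zero hU husupp huU (fun x hx => ?_) fun x hx => ?_
  · have cont_p := hp.continuousAt (hU.mem_nhds hx)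
    have cont_hess (a b) :=
      (contDiffAt_hess (x := x) (m := 0) hu.contDiffAt (by norm_num) a b).continuousAt
    have cont_inner := continuousAt_tensorInner cont_hess cont_hess
    have cont_lap := (contDiffAt_lap (x := x) (m := 0) hu.contDiffAt (by norm_num)).continuousAt
    exact ContinuousAt.continuousWithinAt (by fun_prop)
  · simp [tensorInner, hess_eq_zero_of_notMem_tsupport hx, lap_eq_zero_of_notMem_tsupport hx]

lemma integrableOn_mul_lap_add_sq (hU : IsOpen U) (hp : ContinuousOn p U)
    (hu : ContDiff ℝ 2 u) (husupp : HasCompactSupport u) (huU : tsupport u ⊆ U) :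
    IntegrableOn (fun x => p x * (lap u x + 2 * u x) ^ 2 * aDen x) U := by
  have cont_aDen := continuous_aDen
  have cont_u := hu.continuous
  refine integrableOn_of_continuousOn_of_eq_zero hU husupp huU (fun x hx => ?_) fun x hx => ?_
  · have cont_p := hp.continuousAt (hU.mem_nhds hx)
    have cont_lap := (contDiffAt_lap (x := x) (m := 0) hu.contDiffAt (by norm_num)).continuousAt
    exact ContinuousAt.continuousWithinAt (by fun_prop)
  · simp [lap_eq_zero_of_notMem_tsupport hx, image_eq_zero_of_notMem_tsupport hx]

lemma integrableOn_mul_tensorInner_tracelessHess_hess (hU : IsOpen U) (hp : ContDiffOn ℝ 2 p U)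
    (hu : ContDiff ℝ 2 u) (husupp : HasCompactSupport u) (huU : tsupport u ⊆ U) :
    IntegrableOn (fun x => u x * tensorInner x (tracelessHess u x) (hess p x) * aDen x) U := by
  have cont_aDen := continuous_aDen
  have cont_u := hu.continuous
  refine integrableOn_of_continuousOn_of_eq_zero hU husupp huU (fun x hx => ?_) fun x hx => ?_
  · have hpx := hp.contDiffAt (hU.mem_nhds hx)
    have cont_inner := continuousAt_tensorInner (x := x)
      (fun a b => (contDiffAt_tracelessHess (m := 0) hu.contDiffAt (by norm_num) a b).continuousAt)
      (fun a b => (contDiffAt_hess (m := 0) hpx (by norm_num) a b).continuousAt)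
    exact ContinuousAt.continuousWithinAt (by fun_prop)
  · simp [image_eq_zero_of_notMem_tsupport hx]

end Integrals

theorem conformalKilling_quadratic_integral_general
    {U : Set Pt} (hU : IsOpen U) {p : Pt → ℝ} (hp : ContDiffOn ℝ 2 p U)
    (hΔp : ∀ x ∈ U, lap p x = -2 * p x) {u : Pt → ℝ} (hu : ContDiff ℝ 3 u)
    (husupp : HasCompactSupport u) (huU : tsupport u ⊆ U) :
    (∫ x in U, p x * (2 * tensorInner x (hess u x) (hess u x) - lap u x ^ 2) * aDen x)
    = (∫ x in U, p x * (lap u x + 2 * u x) ^ 2 * aDen x)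
      + 2 * ∫ x in U, u x * tensorInner x (tracelessHess u x) (hess p x) * aDen x := by
  have hpx {x} (hx : x ∈ U) : ContDiffAt ℝ 2 p x := hp.contDiffAt (hU.mem_nhds hx)
  have hu₂ : ContDiff ℝ 2 u := hu.of_le (by norm_num)
  have int_hess := integrableOn_mul_tensorInner_hess_sub hU hp.continuousOn hu₂ husupp huU
  have int_lap := integrableOn_mul_lap_add_sq hU hp.continuousOn hu₂ husupp huU
  have int_traceless := integrableOn_mul_tensorInner_tracelessHess_hess hU hp hu₂ husupp huU
  have integral_div := setIntegral_sum_pd_eq_zero (V := bochnerFlux p u) hU husupp huU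
    (fun a x hx => (contDiffAt_bochnerFlux (hpx hx) hu.contDiffAt a).contDiffWithinAt)
    (fun x hx => bochnerFlux_eq_zero_of_notMem_tsupport hx)
  rw [setIntegral_congr_fun hU.measurableSet fun x hx =>
      sum_pd_bochnerFlux (hpx hx) hu.contDiffAt (hΔp x hx),
    integral_sub ?_ (int_traceless.const_mul 2), integral_sub int_hess int_lap,
    integral_const_mul] at integral_div
  · linarith
  · exact int_hess.sub int_lap

/-- for a conformal Killing field `Y^A` on an open set `U ⊆ S²` with
`Y¹ = ½ ∇_C Y^C` and `u` smooth with compact support in `U`,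
`∫_U Y¹[2∇_A∇_Bu ∇^A∇^Bu - (Δu)²]
  = ∫_U Y¹[(Δ+2)u]² + 2∫_U u (∇^A∇^B Y¹)(∇_A∇_Bu - ½(Δu)σ_{AB})`. -/
theorem conformalKilling_quadratic_integral
    (U : Set Pt) (hU : IsOpen U)
    (Y : Pt → Fin 2 → ℝ) (hY : SmoothVec Y)
    (hCKE : ConformalKilling Y U)
    (u : Pt → ℝ) (hu : ContDiff ℝ (⊤ : ℕ∞) u)
    (husupp : HasCompactSupport u) (huU : tsupport u ⊆ U) :
    (∫ x in U,
      ((1/2) * divg Y x) *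
        (2 * (∑ A, ∑ B, ∑ a, ∑ b,
            hess u x A B * rndInv x A a * rndInv x B b * hess u x a b)
          - (lap u x) ^ 2) * aDen x)
    = (∫ x in U, ((1/2) * divg Y x) * (lap u x + 2 * u x) ^ 2 * aDen x)
      + 2 * ∫ x in U,
          u x * (∑ A, ∑ B, ∑ a, ∑ b,
            rndInv x A a * rndInv x B b * hess (fun y => (1/2) * divg Y y) x a b
              * (hess u x A B - (1/2) * lap u x * rnd x A B)) * aDen x := by
  have hY₃ (b) : ContDiff ℝ 3 (fun x => Y x b) := contDiff_infty.1 (hY b) 3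
  have h := conformalKilling_quadratic_integral_general hU
    (contDiffOn_half_divg hU (fun b => (hY₃ b).contDiffOn) (by norm_num))
    (fun x hx => lap_half_divg hU (fun b => (hY₃ b).contDiffOn) hCKE hx)
    (contDiff_infty.1 hu 3) husupp huU
  simp only [tensorInner_eq_sum_raised_mul _ (tracelessHess u _)] at h
  exact h
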